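/- arXiv:1508.05293 — 2 statements merged into one kernel-verified Lean document; each statement's English description precedes it below -/
import Mathlib

section
/- For coprime positive integers a and b, the number of partitions that are simultaneously a-cores and b-cores equals (1/(a+b)) * binomial(a+b, b). -/
/-- The hook length of the cell `(i, j)` in a Young diagram. -/
def YoungDiagram.hookLength (μ : YoungDiagram) (i j : ℕ) : ℕ :=
  (μ.rowLen i - j) + (μ.colLen j - i) - 1

/-- A Young diagram is an `a`-core if none of its hook lengths is divisible by `a`. -/
def YoungDiagram.IsCore (μ : YoungDiagram) (a : ℕ) : Prop :=
  ∀ i j : ℕ, (i, j) ∈ μ → ¬ a ∣ μ.hookLength i j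

/-!
The positions of the horizontal steps on the boundary path of a Young diagram form a cofinite set
of natural numbers containing `0`, and hook lengths are the differences between a vertical step
and an earlier horizontal step. Hence the diagram is an `a`-core iff this set is stable under
`n ↦ n + a`, and `(a, b)`-cores correspond to the sets `G ∋ 0` stable under `+ a` and `+ b`.

Such a `G` is determined by the least element `F x` of each residue class `x` modulo `a + b`.
These satisfy `F (x + a) = F x + a` or `F (x + a) = F x - b`, and since `a` generates `ℤ/(a + b)`,
`F` is a closed walk with `b` up-steps and `a` down-steps. Up to translating the
values, closed walks are the `b`-element subsets of `ℤ/(a + b)`. As the values of a walk are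
distinct modulo `a + b`, its minimum is attained once, so exactly one of its `a + b` rotations
has its minimum at `0`.
-/

namespace SimultaneousCores

section Boundary

variable {μ : YoungDiagram} {a i j n : ℕ}

/-- The position of the horizontal step below column `j` on the boundary path of `μ`. The path is
read from its bottom left corner and then along the horizontal axis forever; its steps are numbered
so that the first horizontal one has position `0`. -/
def horizontalStep (μ : YoungDiagram) (j : ℕ) : ℕ := j + μ.colLen 0 - μ.colLen j

/-- The position of the vertical step at the end of row `i` on the boundary path of `μ`, in the
numbering of `horizontalStep`. It is negative for the empty rows, whose steps precede the
first horizontal one. -/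
def verticalStep (μ : YoungDiagram) (i : ℕ) : ℤ := μ.rowLen i + μ.colLen 0 - i - 1

theorem horizontalStep_add_colLen (μ : YoungDiagram) (j : ℕ) :
    horizontalStep μ j + μ.colLen j = j + μ.colLen 0 :=
  Nat.sub_add_cancel (le_add_left (μ.colLen_anti 0 j j.zero_le))

theorem horizontalStep_zero (μ : YoungDiagram) : horizontalStep μ 0 = 0 := by
  simp [horizontalStep]

theorem horizontalStep_strictMono (μ : YoungDiagram) : StrictMono (horizontalStep μ) := by
  refine strictMono_nat_of_lt_succ fun j => ?_
  have := μ.colLen_anti j (j + 1) j.le_succ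
  have := horizontalStep_add_colLen μ j
  have := horizontalStep_add_colLen μ (j + 1)
  omega

theorem horizontalStep_add_hookLength (h : (i, j) ∈ μ) :
    (horizontalStep μ j + μ.hookLength i j : ℤ) = verticalStep μ i := by
  have := YoungDiagram.mem_iff_lt_colLen.1 h
  have := YoungDiagram.mem_iff_lt_rowLen.1 h
  have := horizontalStep_add_colLen μ j
  unfold verticalStep YoungDiagram.hookLength
  omega

theorem verticalStep_lt_of_notMem (h : (i, j) ∉ μ) : verticalStep μ i < horizontalStep μ j := by
  have := mt YoungDiagram.mem_iff_lt_colLen.2 h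
  have := mt YoungDiagram.mem_iff_lt_rowLen.2 h
  have := horizontalStep_add_colLen μ j
  unfold verticalStep
  omega

theorem horizontalStep_lt_of_mem (h : (i, j) ∈ μ) : horizontalStep μ j < verticalStep μ i := by
  have := YoungDiagram.mem_iff_lt_colLen.1 h
  have := YoungDiagram.mem_iff_lt_rowLen.1 h
  have := horizontalStep_add_colLen μ j
  unfold verticalStep
  omega

theorem horizontalStep_ne_verticalStep (μ : YoungDiagram) (i j : ℕ) :
    (horizontalStep μ j : ℤ) ≠ verticalStep μ i := by
  by_cases h : (i, j) ∈ μ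
  · exact (horizontalStep_lt_of_mem h).ne
  · exact (verticalStep_lt_of_notMem h).ne'

theorem exists_verticalStep_eq (h : n ∉ Set.range (horizontalStep μ)) :
    ∃ i, verticalStep μ i = n := by
  have hn : horizontalStep μ 0 < n := by
    rw [horizontalStep_zero, Nat.pos_iff_ne_zero]
    rintro rfl
    exact h ⟨0, horizontalStep_zero μ⟩
  obtain ⟨j, hj, hj'⟩ := (horizontalStep_strictMono μ).exists_between_of_tendsto_atTop
    (horizontalStep_strictMono μ).tendsto_atTop hn
  replace hj' := hj'.lt_of_ne fun e => h ⟨j + 1, e.symm⟩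
  have h₁ := horizontalStep_add_colLen μ j
  have h₂ := horizontalStep_add_colLen μ (j + 1)
  let i := μ.colLen 0 + j - n
  have hi : (i, j) ∈ μ := YoungDiagram.mem_iff_lt_colLen.2 (by omega)
  have hi' : (i, j + 1) ∉ μ := fun hi' => by
    have := YoungDiagram.mem_iff_lt_colLen.1 hi'
    omega
  rw [YoungDiagram.mem_iff_lt_rowLen] at hi hi'
  refine ⟨i, ?_⟩
  unfold verticalStep
  omega

theorem isCore_iff_mapsTo : μ.IsCore a ↔
    Set.MapsTo (· + a) (Set.range (horizontalStep μ)) (Set.range (horizontalStep μ)) := by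
  constructor
  · rintro hμ _ ⟨j, rfl⟩
    by_contra hn
    obtain ⟨i, hi⟩ : ∃ i, verticalStep μ i = (horizontalStep μ j + a : ℕ) :=
      exists_verticalStep_eq hn
    have hij : (i, j) ∈ μ := by
      by_contra hij
      have := verticalStep_lt_of_notMem hij
      omega
    have hook : μ.hookLength i j = a := by
      have := horizontalStep_add_hookLength hij
      omega
    exact hμ i j hij hook.symm.dvd
  · rintro hμ i j hij ⟨k, hk⟩
    obtain ⟨j', hj'⟩ := hμ.iterate k ⟨j, rfl⟩
    apply horizontalStep_ne_verticalStep μ i j'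
    rw [hj', add_right_iterate_apply, ← horizontalStep_add_hookLength hij, hk, smul_eq_mul,
      mul_comm k, Nat.cast_add]

theorem colLen_eq_zero (h : μ.rowLen 0 ≤ j) : μ.colLen j = 0 := by
  by_contra h₀
  have h₁ : (0, j) ∈ μ := YoungDiagram.mem_iff_lt_colLen.2 (Nat.pos_of_ne_zero h₀)
  exact h.not_gt (YoungDiagram.mem_iff_lt_rowLen.1 h₁)

theorem colLen_injective : Function.Injective YoungDiagram.colLen := by
  intro μ ν h
  ext ⟨i, j⟩
  rw [YoungDiagram.mem_cells, YoungDiagram.mem_cells, YoungDiagram.mem_iff_lt_colLen,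
    YoungDiagram.mem_iff_lt_colLen, h]

theorem horizontalStep_injective : Function.Injective horizontalStep := by
  intro μ ν h
  have colLen_add (j : ℕ) : μ.colLen j + ν.colLen 0 = ν.colLen j + μ.colLen 0 := by
    have := horizontalStep_add_colLen μ j
    have := horizontalStep_add_colLen ν j
    rw [← h] at this
    omega
  have colLen_zero : ν.colLen 0 = μ.colLen 0 := by
    simpa only [colLen_eq_zero (le_max_left _ _), colLen_eq_zero (le_max_right _ _), zero_add]
      using colLen_add (max (μ.rowLen 0) (ν.rowLen 0))
  exact colLen_injective <| funext fun j => by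
    have := colLen_add j
    omega

theorem exists_colLen_eq {c : ℕ → ℕ} (hc : Antitone c) (h₀ : c n = 0) :
    ∃ μ : YoungDiagram, μ.colLen = c := by
  let μ : YoungDiagram :=
    { cells := {p ∈ Finset.range (c 0) ×ˢ Finset.range n | p.1 < c p.2}
      isLowerSet := by
        rintro ⟨i, j⟩ ⟨i', j'⟩ hle h
        obtain ⟨hi, hj⟩ := Prod.mk_le_mk.1 hle
        have := hc hj
        simp only [Finset.mem_coe, Finset.mem_filter, Finset.mem_product, Finset.mem_range] at h ⊢
        omega }
  have mem_iff (i j : ℕ) : (i, j) ∈ μ ↔ i < c j := by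
    rw [← YoungDiagram.mem_cells]
    simp only [μ, Finset.mem_filter, Finset.mem_product, Finset.mem_range, and_iff_right_iff_imp]
    intro hij
    refine ⟨hij.trans_le (hc j.zero_le), ?_⟩
    by_contra! hj
    have := hc hj
    omega
  refine ⟨μ, funext fun j => eq_of_forall_lt_iff fun i => ?_⟩
  rw [← YoungDiagram.mem_iff_lt_colLen, mem_iff]

theorem exists_horizontalStep_eq {g : ℕ → ℕ} (hg : StrictMono g) (h₀ : g 0 = 0)
    (hn : ∀ j ≥ n, g (j + 1) = g j + 1) : ∃ μ, horizontalStep μ = g := by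
  have le_g (j : ℕ) : j ≤ g j := hg.le_apply
  have excess_mono : Monotone fun j => g j - j := monotone_nat_of_le_succ fun j => by
    have := hg (lt_add_one j)
    have := le_g j
    omega
  have excess_le (j : ℕ) : g j - j ≤ g n - n := by
    rcases le_total j n with hj | hj
    · exact excess_mono hj
    · induction j, hj using Nat.le_induction with
      | base => rfl
      | succ j hj ih =>
        rw [hn j hj, Nat.add_sub_add_right]
        exact ih
  obtain ⟨μ, hμ⟩ := exists_colLen_eq (n := n) (antitone_const_tsub.comp_monotone excess_mono)
    (tsub_self (g n - n))
  refine ⟨μ, funext fun j => ?_⟩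
  have := le_g j
  have := excess_le j
  simp only [horizontalStep, hμ, Function.comp_apply, h₀]
  omega

theorem exists_range_horizontalStep_eq {G : Set ℕ} (h₀ : 0 ∈ G) (hG : Gᶜ.Finite) :
    ∃ μ, Set.range (horizontalStep μ) = G := by
  have hinf : G.Infinite := by simpa using hG.infinite_compl
  have nth_strictMono : StrictMono (Nat.nth (· ∈ G)) := Nat.nth_strictMono hinf
  have range_nth : Set.range (Nat.nth (· ∈ G)) = G := Nat.range_nth_of_infinite hinf
  obtain ⟨M, hM⟩ := hG.bddAbove
  have nth_succ (j : ℕ) (hj : j ≥ M) : Nat.nth (· ∈ G) (j + 1) = Nat.nth (· ∈ G) j + 1 := by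
    have hle : j ≤ Nat.nth (· ∈ G) j := nth_strictMono.le_apply
    have hmem : Nat.nth (· ∈ G) j + 1 ∈ G := by
      by_contra hmem
      have := hM hmem
      omega
    obtain ⟨k, hk⟩ := range_nth.symm.subset hmem
    have hjk : j < k := nth_strictMono.lt_iff_lt.1 (by omega)
    have := nth_strictMono.monotone (Nat.add_one_le_of_lt hjk)
    have := nth_strictMono (lt_add_one j)
    omega
  obtain ⟨μ, hμ⟩ := exists_horizontalStep_eq nth_strictMono (Nat.nth_zero_of_zero h₀) nth_succ
  exact ⟨μ, by rw [hμ, range_nth]⟩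

end Boundary

section UnitStep

variable {N : ℕ} [NeZero N] {u : ZMod N}

theorem induction_add_unit (hu : IsUnit u) {p : ZMod N → Prop} (zero : p 0)
    (add : ∀ x, p x → p (x + u)) (x : ZMod N) : p x := by
  have nsmul (n : ℕ) : p (n • u) := by
    induction n with
    | zero => simpa
    | succ n ih => simpa only [succ_nsmul] using add _ ih
  obtain ⟨v, rfl⟩ := hu
  simpa using nsmul (x * ↑v⁻¹).val

theorem sum_range_natCast {A : Type*} [AddCommMonoid A] (f : ZMod N → A) :
    ∑ j ∈ Finset.range N, f j = ∑ x, f x :=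
  Finset.sum_bij' (fun j _ => (j : ZMod N)) (fun x _ => x.val) (fun _ _ => Finset.mem_univ _)
    (fun x _ => Finset.mem_range.2 x.val_lt)
    (fun _ hj => ZMod.val_cast_of_lt (Finset.mem_range.1 hj))
    (fun x _ => ZMod.natCast_zmod_val x) (fun _ _ => rfl)

theorem exists_map_add_one_eq {A : Type*} [AddCommGroup A] {h : ZMod N → A} (hh : ∑ x, h x = 0) :
    ∃ F : ZMod N → A, ∀ x, F (x + 1) = F x + h x := by
  let g (n : ℕ) : A := ∑ j ∈ Finset.range n, h j
  have periodic : Function.Periodic g N := fun n => by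
    induction n with
    | zero => simpa [g, sum_range_natCast]
    | succ n ih =>
      rw [add_right_comm]
      simp only [g, Finset.sum_range_succ] at ih ⊢
      rw [ih, Nat.cast_add, ZMod.natCast_self, add_zero]
  have val_natCast (n : ℕ) : g (n : ZMod N).val = g n := by
    rw [ZMod.val_natCast, periodic.map_mod_nat]
  refine ⟨fun x => g x.val, (ZMod.natCast_zmod_surjective.forall).2 fun n => ?_⟩
  simp only [← Nat.cast_succ, val_natCast]
  exact Finset.sum_range_succ _ n

theorem exists_map_add_unit_eq {A : Type*} [AddCommGroup A] (hu : IsUnit u) {h : ZMod N → A}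
    (hh : ∑ x, h x = 0) : ∃ F : ZMod N → A, ∀ x, F (x + u) = F x + h x := by
  obtain ⟨v, rfl⟩ := hu
  obtain ⟨F, hF⟩ := exists_map_add_one_eq (h := fun x => h (v.mulLeft x))
    ((Equiv.sum_comp v.mulLeft h).trans hh)
  refine ⟨fun x => F (↑v⁻¹ * x), fun x => ?_⟩
  simpa [mul_add] using hF (↑v⁻¹ * x)

end UnitStep

section AperyFun

variable {N n : ℕ} {G : Set ℕ} {x : ZMod N}

/-- The Apéry function of `G` modulo `N`: the least element of `G` in the residue class `x`, with
the junk value `0` if there is none. -/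
noncomputable def aperyFun (N : ℕ) (G : Set ℕ) (x : ZMod N) : ℕ := sInf {n ∈ G | (n : ZMod N) = x}

theorem aperyFun_mem (h : ∃ n ∈ G, (n : ZMod N) = x) : aperyFun N G x ∈ G := (Nat.sInf_mem h).1

theorem natCast_aperyFun (h : ∃ n ∈ G, (n : ZMod N) = x) : (aperyFun N G x : ZMod N) = x :=
  (Nat.sInf_mem h).2

theorem aperyFun_le (hn : n ∈ G) (hx : (n : ZMod N) = x) : aperyFun N G x ≤ n :=
  Nat.sInf_le ⟨hn, hx⟩

theorem aperyFun_le_iff (hG : Set.MapsTo (· + N) G G) (h : ∃ m ∈ G, (m : ZMod N) = n) :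
    aperyFun N G n ≤ n ↔ n ∈ G := by
  refine ⟨fun hle => ?_, fun hn => aperyFun_le hn rfl⟩
  obtain ⟨k, hk⟩ := (Nat.modEq_iff_dvd' hle).1 <|
    (ZMod.natCast_eq_natCast_iff _ _ _).1 (natCast_aperyFun h)
  have := hG.iterate k (aperyFun_mem h)
  rwa [add_right_iterate_apply, smul_eq_mul, mul_comm, ← hk, Nat.add_sub_cancel' hle] at this

theorem finite_compl_of_mapsTo_add [NeZero N] (hG : Set.MapsTo (· + N) G G)
    (h : ∀ x : ZMod N, ∃ n ∈ G, (n : ZMod N) = x) : Gᶜ.Finite := by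
  refine (Set.finite_iUnion fun x => Set.finite_Iio (aperyFun N G x)).subset fun n hn => ?_
  exact Set.mem_iUnion.2 ⟨n, not_le.1 (mt (aperyFun_le_iff hG (h n)).1 hn)⟩

end AperyFun

variable {a b : ℕ}

theorem isUnit_natCast_left (hab : a.Coprime b) : IsUnit (a : ZMod (a + b)) := by
  simpa [ZMod.isUnit_iff_coprime] using hab

theorem natCast_add_natCast_eq_zero (a b : ℕ) : (a + b : ZMod (a + b)) = 0 := by
  exact_mod_cast ZMod.natCast_self (a + b)

section Modules

variable {G : Set ℕ}

/-- The modules over the numerical semigroup `⟨a, b⟩` with least element `0`: the sets of natural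
numbers containing `0` and stable under `n ↦ n + a` and `n ↦ n + b`. -/
def normalizedModules (a b : ℕ) : Set (Set ℕ) :=
  {G | 0 ∈ G ∧ Set.MapsTo (· + a) G G ∧ Set.MapsTo (· + b) G G}

theorem mapsTo_add_add (hG : G ∈ normalizedModules a b) : Set.MapsTo (· + (a + b)) G G :=
  fun n hn => by simpa only [add_assoc] using hG.2.2 (hG.2.1 hn)

variable [NeZero (a + b)]

theorem exists_mem_natCast_eq (hab : a.Coprime b) (hG : G ∈ normalizedModules a b) :
    ∀ x : ZMod (a + b), ∃ n ∈ G, (n : ZMod (a + b)) = x := by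
  refine induction_add_unit (isUnit_natCast_left hab) ⟨0, hG.1, Nat.cast_zero⟩ ?_
  rintro _ ⟨n, hn, rfl⟩
  exact ⟨n + a, hG.2.1 hn, Nat.cast_add n a⟩

theorem bijOn_range_horizontalStep (hab : a.Coprime b) :
    Set.BijOn (fun μ => Set.range (horizontalStep μ)) {μ | μ.IsCore a ∧ μ.IsCore b}
      (normalizedModules a b) := by
  refine ⟨fun μ hμ => ?_, fun μ _ ν _ h => ?_, fun G hG => ?_⟩
  · exact ⟨⟨0, horizontalStep_zero μ⟩, isCore_iff_mapsTo.1 hμ.1, isCore_iff_mapsTo.1 hμ.2⟩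
  · exact horizontalStep_injective <|
      ((horizontalStep_strictMono μ).range_inj (horizontalStep_strictMono ν)).1 h
  · obtain ⟨μ, rfl⟩ := exists_range_horizontalStep_eq hG.1
      (finite_compl_of_mapsTo_add (mapsTo_add_add hG) (exists_mem_natCast_eq hab hG))
    exact ⟨μ, ⟨isCore_iff_mapsTo.2 hG.2.1, isCore_iff_mapsTo.2 hG.2.2⟩, rfl⟩

end Modules

section CyclicWalk

/-- A closed walk on the natural numbers, indexed by `ℤ/(a + b)` so that the value at `x` is
followed by the value at `x + a`, whose steps are `+ a` and `- b`. -/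
def IsCyclicWalk (a b : ℕ) (F : ZMod (a + b) → ℕ) : Prop :=
  ∀ x, F (x + a) = F x + a ∨ F (x + a) + b = F x

variable {F F' : ZMod (a + b) → ℕ}

theorem IsCyclicWalk.translate (hF : IsCyclicWalk a b F) (y : ZMod (a + b)) :
    IsCyclicWalk a b fun x => F (x + y) := fun x => by
  simpa only [add_right_comm] using hF (x + y)

theorem IsCyclicWalk.mem_normalizedModules (hF : IsCyclicWalk a b F) (h₀ : F 0 = 0) :
    {n : ℕ | F n ≤ n} ∈ normalizedModules a b := by
  refine ⟨by simp [h₀], fun n (hn : F n ≤ n) => ?_, fun n (hn : F n ≤ n) => ?_⟩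
  · have := hF n
    simp only [Set.mem_ofPred_eq, Nat.cast_add]
    omega
  · have := hF (n + b)
    rw [add_assoc, add_comm (b : ZMod (a + b)), natCast_add_natCast_eq_zero, add_zero] at this
    simp only [Set.mem_ofPred_eq, Nat.cast_add]
    omega

variable [NeZero (a + b)]

theorem IsCyclicWalk.natCast_eq (hab : a.Coprime b) (hF : IsCyclicWalk a b F) :
    ∀ x, (F x : ZMod (a + b)) = F 0 + x := by
  refine induction_add_unit (isUnit_natCast_left hab) (add_zero _).symm fun x ih => ?_
  rcases hF x with h | h
  · rw [h, Nat.cast_add, ih, add_assoc]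
  · rw [← h, Nat.cast_add] at ih
    linear_combination ih - natCast_add_natCast_eq_zero a b

theorem IsCyclicWalk.injective (hab : a.Coprime b) (hF : IsCyclicWalk a b F) :
    Function.Injective F := fun x y h => by
  have := hF.natCast_eq hab x
  rwa [h, hF.natCast_eq hab y, add_right_inj, eq_comm] at this

theorem isCyclicWalk_aperyFun (hab : a.Coprime b) {G : Set ℕ} (hG : G ∈ normalizedModules a b) :
    IsCyclicWalk a b (aperyFun (a + b) G) := fun x => by
  have hx := exists_mem_natCast_eq hab hG
  set F := aperyFun (a + b) G
  have up : F (x + a) ≤ F x + a :=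
    aperyFun_le (hG.2.1 (aperyFun_mem (hx x))) (by simp [F, natCast_aperyFun (hx x)])
  have down : F x ≤ F (x + a) + b :=
    aperyFun_le (hG.2.2 (aperyFun_mem (hx (x + a)))) (by
      simp [F, natCast_aperyFun (hx (x + a)), add_assoc, natCast_add_natCast_eq_zero])
  have dvd : a + b ∣ F x + a - F (x + a) := by
    rw [← Nat.modEq_iff_dvd' up, ← ZMod.natCast_eq_natCast_iff]
    simp [F, natCast_aperyFun (hx _)]
  rcases Nat.eq_zero_or_pos (F x + a - F (x + a)) with h | h
  · left
    omega
  · right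
    have := Nat.le_of_dvd h dvd
    omega

theorem bijOn_aperyFun (hab : a.Coprime b) :
    Set.BijOn (aperyFun (a + b)) (normalizedModules a b) {F | IsCyclicWalk a b F ∧ F 0 = 0} := by
  refine ⟨fun G hG => ?_, fun G hG H hH h => ?_, fun F ⟨hF, h₀⟩ => ?_⟩
  · exact ⟨isCyclicWalk_aperyFun hab hG, Nat.le_zero.1 (aperyFun_le hG.1 Nat.cast_zero)⟩
  · ext n
    rw [← aperyFun_le_iff (mapsTo_add_add hG) (exists_mem_natCast_eq hab hG n), h,
      aperyFun_le_iff (mapsTo_add_add hH) (exists_mem_natCast_eq hab hH n)]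
  · have hG := hF.mem_normalizedModules h₀
    refine ⟨_, hG, funext fun x => ?_⟩
    have hx := exists_mem_natCast_eq hab hG x
    have hFx : (F x : ZMod (a + b)) = x := by simpa [h₀] using hF.natCast_eq hab x
    apply le_antisymm
    · exact aperyFun_le (by simp [hFx]) hFx
    · simpa only [Set.mem_ofPred_eq, natCast_aperyFun hx] using aperyFun_mem hx

theorem card_walks_attaining_zero (hab : a.Coprime b) :
    Nat.card {F | IsCyclicWalk a b F ∧ ∃ x, F x = 0} =
      (a + b) * Nat.card {F | IsCyclicWalk a b F ∧ F 0 = 0} := by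
  have rotate_bijOn : Set.BijOn (fun (p : ZMod (a + b) × (ZMod (a + b) → ℕ)) x => p.2 (x + p.1))
      (Set.univ ×ˢ {F | IsCyclicWalk a b F ∧ F 0 = 0}) {F | IsCyclicWalk a b F ∧ ∃ x, F x = 0} := by
    refine ⟨?_, ?_, ?_⟩
    · rintro ⟨y, F⟩ ⟨-, hF, h₀⟩
      exact ⟨hF.translate y, -y, by simpa using h₀⟩
    · rintro ⟨y, F⟩ ⟨-, hF, h₀⟩ ⟨y', F'⟩ ⟨-, -, h₀'⟩ h
      have hFF' (x) : F (x + y) = F' (x + y') := congrFun h x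
      obtain rfl : y = y' := by
        have : F (-y' + y) = F 0 := by
          rw [hFF', neg_add_cancel]
          exact h₀'.trans h₀.symm
        exact (neg_add_eq_zero.1 (hF.injective hab this)).symm
      have : F = F' := funext fun x => by simpa using hFF' (x - y)
      rw [this]
    · rintro F ⟨hF, y, hy⟩
      exact ⟨(-y, fun x => F (x + y)), ⟨Set.mem_univ _, hF.translate y, by simpa⟩, by simp⟩
  rw [← Nat.card_congr (rotate_bijOn.equiv _), Nat.card_coe_set_eq, Nat.card_coe_set_eq,
    Set.ncard_prod, Set.ncard_univ, Nat.card_zmod]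

/-- The up-steps of a walk, recorded by their starting points. -/
def upSteps (F : ZMod (a + b) → ℕ) : Finset (ZMod (a + b)) := {x | F (x + a) = F x + a}

theorem isCyclicWalk_and_upSteps_eq_iff {S : Finset (ZMod (a + b))} :
    IsCyclicWalk a b F ∧ upSteps F = S ↔
      ∀ x, (F (x + a) : ℤ) = F x + if x ∈ S then (a : ℤ) else -b := by
  have hN : a + b ≠ 0 := NeZero.ne (a + b)
  simp only [IsCyclicWalk, Finset.ext_iff, upSteps, Finset.mem_filter_univ, ← forall_and]
  refine forall_congr' fun x => ?_
  split_ifs with hx <;> simp only [hx, iff_true, iff_false] <;> omega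

theorem sum_steps (S : Finset (ZMod (a + b))) :
    ∑ x, (if x ∈ S then (a : ℤ) else -b) = (a + b) * (S.card - b) := by
  have step_eq (x) : (if x ∈ S then (a : ℤ) else -b) = (if x ∈ S then (a + b : ℤ) else 0) - b := by
    split_ifs <;> ring
  simp only [step_eq, Finset.sum_sub_distrib, Finset.sum_ite_mem, Finset.univ_inter,
    Finset.sum_const, Finset.card_univ, ZMod.card, nsmul_eq_mul, Nat.cast_add]
  ring

theorem IsCyclicWalk.card_upSteps (hF : IsCyclicWalk a b F) : (upSteps F).card = b := by
  have h : ∑ x, (F (x + a) : ℤ) = ∑ x, (F x : ℤ) :=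
    Equiv.sum_comp (Equiv.addRight (a : ZMod (a + b))) fun x => (F x : ℤ)
  simp only [isCyclicWalk_and_upSteps_eq_iff.1 ⟨hF, rfl⟩, Finset.sum_add_distrib, add_eq_left,
    sum_steps] at h
  have hN : (a + b : ℤ) ≠ 0 := by exact_mod_cast NeZero.ne (a + b)
  have := (mul_eq_zero.1 h).resolve_left hN
  omega

theorem IsCyclicWalk.eq_of_upSteps_eq (hab : a.Coprime b) (hF : IsCyclicWalk a b F)
    (hF' : IsCyclicWalk a b F') (h₀ : ∃ x, F x = 0) (h₀' : ∃ x, F' x = 0)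
    (h : upSteps F = upSteps F') : F = F' := by
  have sub_eq : ∀ x, (F x - F' x : ℤ) = F 0 - F' 0 := by
    refine induction_add_unit (isUnit_natCast_left hab) rfl fun x ih => ?_
    rw [isCyclicWalk_and_upSteps_eq_iff.1 ⟨hF, h⟩, isCyclicWalk_and_upSteps_eq_iff.1 ⟨hF', rfl⟩,
      add_sub_add_right_eq_sub, ih]
  obtain ⟨x, hx⟩ := h₀
  obtain ⟨y, hy⟩ := h₀'
  have hsub : (F 0 - F' 0 : ℤ) = 0 := by
    have := sub_eq x
    have := sub_eq y
    omega
  exact funext fun z => by exact_mod_cast sub_eq_zero.1 ((sub_eq z).trans hsub)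

theorem exists_isCyclicWalk_upSteps_eq (hab : a.Coprime b) {S : Finset (ZMod (a + b))}
    (hS : S.card = b) : ∃ F, (IsCyclicWalk a b F ∧ upSteps F = S) ∧ ∃ x, F x = 0 := by
  obtain ⟨P, hP⟩ := exists_map_add_unit_eq (isUnit_natCast_left hab)
    (h := fun x => if x ∈ S then (a : ℤ) else -b) (by rw [sum_steps, hS, sub_self, mul_zero])
  obtain ⟨y, hy⟩ := Finite.exists_min P
  have toNat_sub (x) : ((P x - P y).toNat : ℤ) = P x - P y :=
    Int.toNat_of_nonneg (sub_nonneg.2 (hy x))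
  refine ⟨fun x => (P x - P y).toNat, isCyclicWalk_and_upSteps_eq_iff.2 fun x => ?_, y, by simp⟩
  rw [toNat_sub, toNat_sub, hP, add_sub_right_comm]

theorem bijOn_upSteps (hab : a.Coprime b) :
    Set.BijOn upSteps {F | IsCyclicWalk a b F ∧ ∃ x, F x = 0} {S | S.card = b} := by
  refine ⟨fun F hF => hF.1.card_upSteps, fun F hF F' hF' h => ?_, fun S hS => ?_⟩
  · exact hF.1.eq_of_upSteps_eq hab hF'.1 hF.2 hF'.2 h
  · obtain ⟨F, ⟨hF, hFS⟩, h₀⟩ := exists_isCyclicWalk_upSteps_eq hab hS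
    exact ⟨F, ⟨hF, h₀⟩, hFS⟩

end CyclicWalk

end SimultaneousCores

/-- Anderson's theorem: the number of simultaneous `(a,b)`-cores is
`(1/(a+b)) * (a+b).choose b`. -/
theorem card_simultaneous_cores (a b : ℕ) (ha : 0 < a) (hb : 0 < b)
    (hab : Nat.Coprime a b) :
    Nat.card {μ : YoungDiagram | μ.IsCore a ∧ μ.IsCore b} = (a + b).choose b / (a + b) := by
  have : NeZero (a + b) := ⟨by omega⟩
  open SimultaneousCores in
  have key : (a + b).choose b = (a + b) * Nat.card {μ : YoungDiagram | μ.IsCore a ∧ μ.IsCore b} :=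
    calc (a + b).choose b
      _ = Nat.card {S : Finset (ZMod (a + b)) | S.card = b} := by
        simp [Nat.card_eq_fintype_card, ZMod.card]
      _ = Nat.card {F | IsCyclicWalk a b F ∧ ∃ x, F x = 0} :=
        (Nat.card_congr ((bijOn_upSteps hab).equiv _)).symm
      _ = (a + b) * Nat.card {F | IsCyclicWalk a b F ∧ F 0 = 0} := card_walks_attaining_zero hab
      _ = (a + b) * Nat.card (normalizedModules a b) := by
        rw [Nat.card_congr ((bijOn_aperyFun hab).equiv _)]
      _ = (a + b) * Nat.card {μ : YoungDiagram | μ.IsCore a ∧ μ.IsCore b} := by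
        rw [Nat.card_congr ((bijOn_range_horizontalStep hab).equiv _)]
  rw [key, Nat.mul_div_cancel_left _ (by omega)]
end

section
/- For coprime positive integers a and b, the maximum number of boxes among all simultaneous (a,b)-cores equals (a^2-1)(b^2-1)/24, and this value is a nonnegative integer. -/
/-!
A diagram `μ` is encoded by the set `S` of its first-column hook lengths. The hook lengths of `μ`
are the differences `x - y > 0` with `x ∈ S` and `y ∉ S`, so `μ` is an `a`-core exactly when `S` is
closed under subtraction of `a`. Such an `S` is determined by the least gap `g r ∉ S` in each
residue class `r` modulo `a`, and sums of `F (x + a) - F x` over `S` telescope along the residue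
classes. Taking `F x = x` and `F x = x ^ 2` shows that the size of `μ` is, up to an affine
normalization, the variance of `g`.

If `S` is also closed under subtraction of `b`, then `g (r + b) ≤ g r + b`. Going around the cycle
`0, b, 2b, …` in `ZMod a`, the function `g` thus rises by at most `b` per step and returns to its
starting value, which bounds its variance by that of `0, b, …, (a - 1) b`. These are the values
of `g` when `S` is the set of gaps of the numerical semigroup generated by `a` and `b`.
-/

open Finset

namespace SimultaneousCores

section Dispersion

variable {ι κ R : Type*} [Fintype ι] [Fintype κ] [CommRing R]

/-- `dispersion g` is `(card ι)²` times the variance of the values of `g`, the quantity that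
measures the size of a core. This scaling keeps it free of denominators. -/
def dispersion (g : ι → R) : R :=
  Fintype.card ι * ∑ i, g i ^ 2 - (∑ i, g i) ^ 2

lemma dispersion_comp_equiv (e : ι ≃ κ) (g : κ → R) :
    dispersion (fun i => g (e i)) = dispersion g := by
  unfold dispersion
  rw [Fintype.card_congr e, e.sum_comp g, e.sum_comp fun k => g k ^ 2]

lemma dispersion_mul_const (g : ι → R) (c : R) :
    dispersion (fun i => g i * c) = dispersion g * c ^ 2 := by
  simp only [dispersion, mul_pow, ← sum_mul]
  ring

lemma sum_sum_sq_sub_eq_two_mul_dispersion {G : Type*} [AddGroup G] [Fintype G] (g : G → R) :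
    ∑ d, ∑ j, (g (j + d) - g j) ^ 2 = 2 * dispersion g := by
  have reindex (j : G) : ∑ d, (g (j + d) - g j) ^ 2 = ∑ i, (g i - g j) ^ 2 :=
    Equiv.sum_comp (Equiv.addLeft j) fun i => (g i - g j) ^ 2
  have expand (j : G) : ∑ d, (g (j + d) - g j) ^ 2 =
      ∑ i, g i ^ 2 - 2 * (g j * ∑ i, g i) + Fintype.card G * g j ^ 2 := by
    rw [reindex, mul_sum, mul_sum, ← nsmul_eq_mul,
      ← card_univ, ← sum_const, ← sum_sub_distrib, ← sum_add_distrib]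
    exact sum_congr rfl fun i _ => by ring
  rw [sum_comm, sum_congr rfl fun j _ => expand j, sum_add_distrib, sum_sub_distrib, ← mul_sum,
    ← mul_sum, ← sum_mul, sum_const, card_univ, nsmul_eq_mul, dispersion]
  ring

end Dispersion

section ZModSums

lemma two_mul_sum_range_cast {R : Type*} [CommRing R] (n : ℕ) :
    2 * ∑ i ∈ range n, (i : R) = n * (n - 1) := by
  induction n with
  | zero => simp
  | succ n ih => rw [sum_range_succ, mul_add, ih]; push_cast; ring

lemma six_mul_sum_range_sq_cast {R : Type*} [CommRing R] (n : ℕ) :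
    6 * ∑ i ∈ range n, (i : R) ^ 2 = n * (n - 1) * (2 * n - 1) := by
  induction n with
  | zero => simp
  | succ n ih => rw [sum_range_succ, mul_add, ih]; push_cast; ring

variable {a : ℕ} [NeZero a]

lemma sum_zmod_val {M : Type*} [AddCommMonoid M] (F : ℕ → M) :
    ∑ r : ZMod a, F r.val = ∑ i ∈ range a, F i := by
  cases a with
  | zero => exact absurd rfl (NeZero.ne 0)
  | succ n => exact Fin.sum_univ_eq_sum_range F (n + 1)

variable {R : Type*} [CommRing R]

lemma two_mul_sum_val : 2 * ∑ r : ZMod a, (r.val : R) = a * (a - 1) := by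
  rw [sum_zmod_val fun i => (i : R), two_mul_sum_range_cast]

lemma six_mul_sum_val_sq : 6 * ∑ r : ZMod a, (r.val : R) ^ 2 = a * (a - 1) * (2 * a - 1) := by
  rw [sum_zmod_val fun i => (i : R) ^ 2, six_mul_sum_range_sq_cast]

variable (a R) in
lemma twelve_mul_dispersion_val :
    12 * dispersion (fun r : ZMod a => (r.val : R)) = (a : R) ^ 2 * (a ^ 2 - 1) := by
  rw [dispersion, ZMod.card]
  linear_combination 2 * (a : R) * six_mul_sum_val_sq (a := a) (R := R)
    - 3 * (2 * ∑ r : ZMod a, (r.val : R) + a * (a - 1)) * two_mul_sum_val (a := a) (R := R)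

lemma dispersion_comp_mul_natCast {b : ℕ} (hab : a.Coprime b) (g : ZMod a → R) :
    dispersion (fun j => g (j * b)) = dispersion g :=
  dispersion_comp_equiv (ZMod.unitOfCoprime b hab.symm).mulRight g

end ZModSums

section DispersionBound

variable {a : ℕ} {R : Type*} [CommRing R] [LinearOrder R] [IsStrictOrderedRing R]
  {g : ZMod a → R} {b : R}

lemma apply_add_natCast_le (hg : ∀ j, g (j + 1) ≤ g j + b) (j : ZMod a) (n : ℕ) :
    g (j + n) ≤ g j + n * b := by
  induction n with
  | zero => simp
  | succ n ih =>
    have step := hg (j + n)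
    push_cast
    rw [← add_assoc]
    linarith

variable [NeZero a]

lemma sum_sq_sub_le (hg : ∀ j, g (j + 1) ≤ g j + b) (d : ZMod a) :
    ∑ j, (g (j + d) - g j) ^ 2 ≤ a * (d.val * (a - d.val) * b ^ 2) := by
  have ascent (j : ZMod a) : g (j + d) ≤ g j + d.val * b := by
    simpa using apply_add_natCast_le hg j d.val
  have descent (j : ZMod a) : g j ≤ g (j + d) + (a - d.val) * b := by
    simpa [Nat.cast_sub d.val_lt.le] using apply_add_natCast_le hg (j + d) (a - d.val)
  have pointwise (j : ZMod a) : (g (j + d) - g j) ^ 2 ≤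
      (2 * d.val - a) * b * (g (j + d) - g j) + d.val * (a - d.val) * b ^ 2 := by
    linarith [mul_nonneg (sub_nonneg.2 (ascent j)) (sub_nonneg.2 (descent j))]
  have sum_differences : ∑ j, (g (j + d) - g j) = 0 := by
    rw [sum_sub_distrib, sub_eq_zero]
    exact Equiv.sum_comp (Equiv.addRight d) g
  calc ∑ j, (g (j + d) - g j) ^ 2
      ≤ ∑ j, ((2 * d.val - a) * b * (g (j + d) - g j) + d.val * (a - d.val) * b ^ 2) :=
        sum_le_sum fun j _ => pointwise j
    _ = a * (d.val * (a - d.val) * b ^ 2) := by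
        rw [sum_add_distrib, ← mul_sum, sum_differences, mul_zero, zero_add, sum_const, card_univ,
          ZMod.card, nsmul_eq_mul]

theorem twelve_mul_dispersion_le (hg : ∀ j, g (j + 1) ≤ g j + b) :
    12 * dispersion g ≤ a ^ 2 * (a ^ 2 - 1) * b ^ 2 := by
  have sum_bounds : 6 * ∑ d : ZMod a, (a : R) * (d.val * (a - d.val) * b ^ 2) =
      a ^ 2 * (a ^ 2 - 1) * b ^ 2 := by
    have expand : ∑ d : ZMod a, (a : R) * (d.val * (a - d.val) * b ^ 2) =
        a * b ^ 2 * (a * ∑ d : ZMod a, (d.val : R) - ∑ d : ZMod a, (d.val : R) ^ 2) := by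
      rw [mul_sum, ← sum_sub_distrib, mul_sum]
      exact sum_congr rfl fun d _ => by ring
    rw [expand]
    linear_combination 3 * (a : R) ^ 2 * b ^ 2 * two_mul_sum_val (a := a) (R := R)
      - (a : R) * b ^ 2 * six_mul_sum_val_sq (a := a) (R := R)
  have total := sum_le_sum fun d (_ : d ∈ univ) => sum_sq_sub_le hg d
  rw [sum_sum_sq_sub_eq_two_mul_dispersion] at total
  linarith

end DispersionBound

section FirstGap

/-- `S` is closed under subtraction of `a` inside `ℕ`. For the first-column hook lengths of a
diagram this is the property of being an `a`-core. -/
def ClosedUnderSub (S : Finset ℕ) (a : ℕ) : Prop :=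
  ∀ x, x + a ∈ S → x ∈ S

variable {S : Finset ℕ} {a b : ℕ}

lemma ClosedUnderSub.mem_of_add_mul_mem (hS : ClosedUnderSub S a) {x : ℕ} (m : ℕ)
    (hx : x + a * m ∈ S) : x ∈ S := by
  induction m with
  | zero => exact hx
  | succ m ih => exact ih (hS _ (by rwa [add_assoc, ← Nat.mul_succ]))

/-- The least natural number in the residue class `r` that is not in `S`: the first free position
of the runner `r` on the `a`-abacus displaying `S`. It is meaningful only for `a ≠ 0`, since
otherwise the class may contain no such number. -/
noncomputable def firstGap (S : Finset ℕ) (r : ZMod a) : ℕ :=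
  sInf {x : ℕ | (x : ZMod a) = r ∧ x ∉ S}

lemma firstGap_le {r : ZMod a} {x : ℕ} (hxr : (x : ZMod a) = r) (hxS : x ∉ S) :
    firstGap S r ≤ x :=
  Nat.sInf_le ⟨hxr, hxS⟩

variable [NeZero a]

lemma firstGap_spec (S : Finset ℕ) (r : ZMod a) :
    (firstGap S r : ZMod a) = r ∧ firstGap S r ∉ S := by
  obtain ⟨n, hn⟩ := S.exists_nat_subset_range
  refine Nat.sInf_mem (s := {x : ℕ | (x : ZMod a) = r ∧ x ∉ S}) ⟨r.val + a * n, by simp, ?_⟩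
  exact fun h => (mem_range.1 (hn h)).not_ge
    ((Nat.le_mul_of_pos_left n (NeZero.pos a)).trans (Nat.le_add_left _ _))

@[simp]
lemma cast_firstGap (S : Finset ℕ) (r : ZMod a) : (firstGap S r : ZMod a) = r :=
  (firstGap_spec S r).1

lemma firstGap_notMem (S : Finset ℕ) (r : ZMod a) : firstGap S r ∉ S :=
  (firstGap_spec S r).2

lemma firstGap_injective (S : Finset ℕ) : Function.Injective (firstGap S : ZMod a → ℕ) :=
  Function.LeftInverse.injective (g := Nat.cast) (cast_firstGap S)

lemma dvd_sub_firstGap {x : ℕ} (hle : firstGap S (x : ZMod a) ≤ x) :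
    a ∣ x - firstGap S (x : ZMod a) :=
  (Nat.modEq_iff_dvd' hle).1 ((ZMod.natCast_eq_natCast_iff _ _ a).1 (cast_firstGap S _))

lemma ClosedUnderSub.mem_iff_lt_firstGap (hS : ClosedUnderSub S a) {x : ℕ} :
    x ∈ S ↔ x < firstGap S (x : ZMod a) := by
  refine ⟨fun hx => ?_, fun hx => ?_⟩
  · by_contra! hle
    obtain ⟨m, hm⟩ := dvd_sub_firstGap hle
    exact firstGap_notMem S (x : ZMod a)
      (hS.mem_of_add_mul_mem m (by rwa [← hm, Nat.add_sub_cancel' hle]))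
  · by_contra hxS
    exact (firstGap_le rfl hxS).not_gt hx

lemma ClosedUnderSub.firstGap_add_le (hS : ClosedUnderSub S b) (r : ZMod a) :
    firstGap S (r + (b : ZMod a)) ≤ firstGap S r + b :=
  firstGap_le (by simp) fun h => firstGap_notMem S r (hS _ h)

lemma firstGap_cast_eq_self {x : ℕ} (hxS : x ∉ S) (hlt : x < firstGap S (x : ZMod a) + a) :
    firstGap S (x : ZMod a) = x := by
  have hle := firstGap_le (S := S) (rfl : (x : ZMod a) = x) hxS
  have := Nat.eq_zero_of_dvd_of_lt (dvd_sub_firstGap hle) (by lia)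
  lia

lemma ClosedUnderSub.union_image_firstGap (hS : ClosedUnderSub S a) :
    S ∪ univ.image (firstGap S : ZMod a → ℕ) =
      S.image (· + a) ∪ univ.image (ZMod.val : ZMod a → ℕ) := by
  ext x
  simp only [mem_union, mem_image, mem_univ, true_and]
  have mem_or_gap (hlt : x < firstGap S (x : ZMod a) + a) :
      x ∈ S ∨ ∃ r : ZMod a, firstGap S r = x :=
    or_iff_not_imp_left.2 fun hxS => ⟨x, firstGap_cast_eq_self hxS hlt⟩
  constructor
  · intro hx
    rcases lt_or_ge x a with hxa | hxa
    · exact .inr ⟨x, ZMod.val_cast_of_lt hxa⟩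
    obtain ⟨y, rfl⟩ := Nat.exists_eq_add_of_le' hxa
    refine .inl ⟨y, ?_, rfl⟩
    rcases hx with hx | ⟨r, hr⟩
    · exact hS y hx
    · by_contra hy
      have hyr : (y : ZMod a) = r := by simpa [hr] using cast_firstGap S r
      have := firstGap_le hyr hy
      have := NeZero.pos a
      lia
  · rintro (⟨y, hy, rfl⟩ | ⟨r, rfl⟩)
    · exact mem_or_gap (by simpa using hS.mem_iff_lt_firstGap.1 hy)
    · exact mem_or_gap (r.val_lt.trans_le (Nat.le_add_left _ _))

lemma ClosedUnderSub.sum_apply_add_sub_apply (hS : ClosedUnderSub S a) {M : Type*}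
    [AddCommGroup M] (F : ℕ → M) :
    ∑ x ∈ S, (F (x + a) - F x) = ∑ r : ZMod a, F (firstGap S r) - ∑ r : ZMod a, F r.val := by
  have disjoint_gaps : Disjoint S (univ.image (firstGap S : ZMod a → ℕ)) := by
    simp [disjoint_right, firstGap_notMem]
  have disjoint_bottom : Disjoint (S.image (· + a)) (univ.image (ZMod.val : ZMod a → ℕ)) := by
    simp only [disjoint_left, mem_image, mem_univ, true_and]
    rintro _ ⟨x, -, rfl⟩ ⟨r, hr⟩
    exact absurd r.val_lt (by lia)
  have sum_union_eq := congrArg (fun T => ∑ x ∈ T, F x) hS.union_image_firstGap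
  simp only [sum_union disjoint_gaps, sum_union disjoint_bottom,
    sum_image (add_left_injective a).injOn, sum_image (firstGap_injective S).injOn,
    sum_image (ZMod.val_injective a).injOn] at sum_union_eq
  rw [sum_sub_distrib, sub_eq_sub_iff_add_eq_add, ← sum_union_eq, add_comm]

theorem ClosedUnderSub.twelve_mul_dispersion_firstGap (hS : ClosedUnderSub S a) :
    12 * dispersion (fun r : ZMod a => (firstGap S r : ℤ)) =
      a ^ 2 * (12 * (2 * ∑ x ∈ S, (x : ℤ) - #S * (#S - 1)) + (a ^ 2 - 1)) := by
  have first_moment : a * #S = ∑ r : ZMod a, (firstGap S r : ℤ) - ∑ r : ZMod a, (r.val : ℤ) := by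
    rw [← hS.sum_apply_add_sub_apply fun x => (x : ℤ)]
    simp [mul_comm]
  have second_moment : 2 * a * ∑ x ∈ S, (x : ℤ) + a ^ 2 * #S =
      ∑ r : ZMod a, (firstGap S r : ℤ) ^ 2 - ∑ r : ZMod a, (r.val : ℤ) ^ 2 := by
    rw [← hS.sum_apply_add_sub_apply fun x => (x : ℤ) ^ 2, mul_sum, mul_comm _ (#S : ℤ),
      ← nsmul_eq_mul, ← sum_const, ← sum_add_distrib]
    exact sum_congr rfl fun x _ => by push_cast; ring
  have sum_gaps : 2 * ∑ r : ZMod a, (firstGap S r : ℤ) = 2 * a * #S + a * (a - 1) := by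
    linarith [two_mul_sum_val (a := a) (R := ℤ)]
  have sum_sq_gaps : 6 * ∑ r : ZMod a, (firstGap S r : ℤ) ^ 2 =
      12 * a * ∑ x ∈ S, (x : ℤ) + 6 * a ^ 2 * #S + a * (a - 1) * (2 * a - 1) := by
    linarith [six_mul_sum_val_sq (a := a) (R := ℤ)]
  rw [dispersion, ZMod.card]
  linear_combination 2 * (a : ℤ) * sum_sq_gaps
    - 3 * (2 * ∑ r : ZMod a, (firstGap S r : ℤ) + (2 * a * #S + a * (a - 1))) * sum_gaps

end FirstGap

section FirstColumn

variable {μ : YoungDiagram} {i j : ℕ}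

/-- The set of first-column hook lengths of `μ`, the beta-set of `μ` for which no zero
rows are added: it determines `μ` and does not contain `0`. -/
def firstColumnHooks (μ : YoungDiagram) : Finset ℕ :=
  (range (μ.colLen 0)).image fun i => μ.hookLength i 0

/-- The `j`-th gap of the beta-set of `μ`. Numbering the unit steps of the boundary of `μ` from `0`,
starting at the bottom of the first column, `columnGap μ j` is the number of the horizontal step
below column `j`, while the vertical steps are numbered by `firstColumnHooks μ`. -/
def columnGap (μ : YoungDiagram) (j : ℕ) : ℕ :=
  j + (μ.colLen 0 - μ.colLen j)

lemma hookLength_add_columnGap (h : (i, j) ∈ μ) :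
    μ.hookLength i j + columnGap μ j = μ.hookLength i 0 := by
  have hrow := YoungDiagram.mem_iff_lt_rowLen.1 h
  have hcol := YoungDiagram.mem_iff_lt_colLen.1 h
  have hanti := μ.colLen_anti 0 j j.zero_le
  unfold YoungDiagram.hookLength columnGap
  lia

lemma hookLength_zero_lt_columnGap (hi : i < μ.colLen 0) (h : (i, j) ∉ μ) :
    μ.hookLength i 0 < columnGap μ j := by
  have hrow := mt YoungDiagram.mem_iff_lt_rowLen.2 h
  have hcol := mt YoungDiagram.mem_iff_lt_colLen.2 h
  unfold YoungDiagram.hookLength columnGap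
  lia

lemma hookLength_pos (h : (i, j) ∈ μ) : 0 < μ.hookLength i j := by
  have hrow := YoungDiagram.mem_iff_lt_rowLen.1 h
  have hcol := YoungDiagram.mem_iff_lt_colLen.1 h
  unfold YoungDiagram.hookLength
  lia

lemma strictMono_columnGap (μ : YoungDiagram) : StrictMono (columnGap μ) :=
  strictMono_nat_of_lt_succ fun j => by
    have := μ.colLen_anti j (j + 1) j.le_succ
    unfold columnGap
    lia

lemma columnGap_notMem_firstColumnHooks (μ : YoungDiagram) (j : ℕ) :
    columnGap μ j ∉ firstColumnHooks μ := by
  simp only [firstColumnHooks, mem_image, mem_range, not_exists, not_and]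
  intro i hi heq
  by_cases h : (i, j) ∈ μ
  · have := hookLength_pos h
    have := hookLength_add_columnGap h
    lia
  · exact (hookLength_zero_lt_columnGap hi h).ne heq

lemma mem_firstColumnHooks_of_columnGap_lt {y : ℕ} (hlt : columnGap μ j < y)
    (hlt_succ : y < columnGap μ (j + 1)) : y ∈ firstColumnHooks μ := by
  unfold columnGap at hlt hlt_succ
  obtain ⟨i, hi⟩ : ∃ i, y + i = j + μ.colLen 0 := ⟨j + μ.colLen 0 - y, by lia⟩
  have hrow_lower : j < μ.rowLen i :=
    YoungDiagram.mem_iff_lt_rowLen.1 (YoungDiagram.mem_iff_lt_colLen.2 (by lia))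
  have hrow_upper : ¬ j + 1 < μ.rowLen i := fun h => by
    have := YoungDiagram.mem_iff_lt_colLen.1 (YoungDiagram.mem_iff_lt_rowLen.2 h)
    lia
  refine mem_image.2 ⟨i, mem_range.2 (by lia), ?_⟩
  unfold YoungDiagram.hookLength
  lia

theorem notMem_firstColumnHooks_iff {y : ℕ} :
    y ∉ firstColumnHooks μ ↔ ∃ j, columnGap μ j = y := by
  refine ⟨fun hy => ?_, fun ⟨j, hj⟩ => hj ▸ columnGap_notMem_firstColumnHooks μ j⟩
  rcases Nat.eq_zero_or_pos y with rfl | hpos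
  · exact ⟨0, by simp [columnGap]⟩
  · obtain ⟨j, hlt, hle⟩ := (strictMono_columnGap μ).exists_between_of_tendsto_atTop
      (strictMono_columnGap μ).tendsto_atTop (x := y) (by simpa [columnGap] using hpos)
    exact ⟨j + 1, (hle.eq_of_not_lt fun h => hy (mem_firstColumnHooks_of_columnGap_lt hlt h)).symm⟩

theorem isCore_iff_closedUnderSub {a : ℕ} (ha : 0 < a) :
    μ.IsCore a ↔ ClosedUnderSub (firstColumnHooks μ) a := by
  refine ⟨fun hcore x hxa => ?_, fun hclosed i j hij ⟨m, hm⟩ => ?_⟩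
  · by_contra hx
    obtain ⟨j, rfl⟩ := notMem_firstColumnHooks_iff.1 hx
    obtain ⟨i, hi, hhook⟩ := mem_image.1 hxa
    by_cases hij : (i, j) ∈ μ
    · have := hookLength_add_columnGap hij
      exact hcore i j hij ⟨1, by lia⟩
    · have := hookLength_zero_lt_columnGap (mem_range.1 hi) hij
      lia
  · have hi : i < μ.colLen 0 :=
      (YoungDiagram.mem_iff_lt_colLen.1 hij).trans_le (μ.colLen_anti 0 j j.zero_le)
    refine columnGap_notMem_firstColumnHooks μ j (hclosed.mem_of_add_mul_mem m ?_)
    rw [← hm, add_comm, hookLength_add_columnGap hij]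
    exact mem_image_of_mem _ (mem_range.2 hi)

lemma injOn_hookLength_zero (μ : YoungDiagram) :
    Set.InjOn (fun i => μ.hookLength i 0) (range (μ.colLen 0)) := by
  refine StrictAntiOn.injOn fun i _ i' hi' hlt => ?_
  have hlt' := mem_range.1 (mem_coe.1 hi')
  have hanti := μ.rowLen_anti i i' hlt.le
  simp only [YoungDiagram.hookLength]
  lia

lemma card_firstColumnHooks (μ : YoungDiagram) : #(firstColumnHooks μ) = μ.colLen 0 := by
  rw [firstColumnHooks, card_image_of_injOn (injOn_hookLength_zero μ), card_range]

lemma card_eq_sum_rowLen (μ : YoungDiagram) : μ.card = ∑ i ∈ range (μ.colLen 0), μ.rowLen i := by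
  simp only [YoungDiagram.rowLen_eq_card]
  refine card_eq_sum_card_fiberwise fun c hc => ?_
  exact mem_coe.2 (mem_range.2 (YoungDiagram.mem_iff_lt_colLen.1
    (μ.up_left_mem le_rfl c.2.zero_le hc)))

theorem two_mul_card_eq_sum_firstColumnHooks (μ : YoungDiagram) :
    2 * (μ.card : ℤ) = 2 * ∑ x ∈ firstColumnHooks μ, (x : ℤ) -
      #(firstColumnHooks μ) * (#(firstColumnHooks μ) - 1) := by
  have hook (i : ℕ) (hi : i ∈ range (μ.colLen 0)) :
      (μ.hookLength i 0 : ℤ) = μ.rowLen i + (μ.colLen 0 - 1 - i : ℕ) := by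
    have := mem_range.1 hi
    unfold YoungDiagram.hookLength
    lia
  rw [card_firstColumnHooks, firstColumnHooks, sum_image (injOn_hookLength_zero μ),
    sum_congr rfl hook, sum_add_distrib, sum_range_reflect (fun i => (i : ℤ)), mul_add,
    two_mul_sum_range_cast, card_eq_sum_rowLen]
  push_cast
  ring

end FirstColumn

section DiagramOfHooks

lemma exists_colLen_eq_s1 {f : ℕ → ℕ} (hf : Antitone f) {n : ℕ} (hn : f n = 0) :
    ∃ μ : YoungDiagram, ∀ j, μ.colLen j = f j := by
  let μ : YoungDiagram :=
    { cells := (range (f 0) ×ˢ range n).filter fun c => c.1 < f c.2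
      isLowerSet := by
        rintro ⟨i, j⟩ ⟨i', j'⟩ ⟨hi : i' ≤ i, hj : j' ≤ j⟩ hij
        simp only [coe_filter, mem_product, mem_range, Set.mem_ofPred_eq] at hij ⊢
        have := hf hj
        lia }
  have mem_iff (i j : ℕ) : (i, j) ∈ μ ↔ i < f j := by
    rw [← YoungDiagram.mem_cells]
    simp only [μ, mem_filter, mem_product, mem_range, and_iff_right_iff_imp]
    intro hij
    refine ⟨hij.trans_le (hf j.zero_le), ?_⟩
    by_contra! hnj
    have := hf hnj
    lia
  exact ⟨μ, fun j => eq_of_forall_lt_iff fun i => by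
    rw [← YoungDiagram.mem_iff_lt_colLen, mem_iff]⟩

lemma count_notMem_add_card {S : Finset ℕ} {y : ℕ} (hy : y ∉ S) :
    Nat.count (· ∉ S) y + #S = y + #{x ∈ S | y < x} := by
  have count_eq : Nat.count (· ∉ S) y = #(range y \ S) := by
    rw [Nat.count_eq_card_filter_range, filter_notMem_eq_sdiff]
  have above_eq : {x ∈ S | y < x} = S \ range y := by
    ext x
    simp only [mem_filter, mem_sdiff, mem_range, not_lt, and_congr_right_iff]
    exact fun hx => ⟨le_of_lt, fun hle => hle.lt_of_ne fun h => hy (h ▸ hx)⟩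
  have below := card_sdiff_add_card_inter (range y) S
  have total := card_sdiff_add_card_inter S (range y)
  rw [inter_comm] at total
  rw [card_range] at below
  rw [count_eq, above_eq]
  lia

theorem exists_firstColumnHooks_eq {S : Finset ℕ} (hS : 0 ∉ S) :
    ∃ μ, firstColumnHooks μ = S := by
  have hinf : (Set.ofPred (· ∉ S)).Infinite := S.finite_toSet.infinite_compl
  set gap : ℕ → ℕ := Nat.nth (· ∉ S)
  have gap_mono : Monotone gap := Nat.nth_monotone hinf
  have gap_notMem (j : ℕ) : gap j ∉ S := Nat.nth_mem_of_infinite hinf j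
  have gap_zero : gap 0 = 0 := Nat.nth_zero_of_zero hS
  obtain ⟨n, hn⟩ := S.exists_nat_subset_range
  obtain ⟨μ, hμ⟩ := exists_colLen_eq_s1 (f := fun j => #{x ∈ S | gap j < x})
    (fun j j' hj => card_le_card (monotone_filter_right S fun x _ hx => (gap_mono hj).trans_lt hx))
    (n := n) (card_eq_zero.2 <| filter_eq_empty_iff.2 fun x hx =>
      ((mem_range.1 (hn hx)).trans_le (Nat.nth_strictMono hinf).le_apply).not_gt)
  have columnGap_eq (j : ℕ) : columnGap μ j = gap j := by
    have anti := μ.colLen_anti 0 j j.zero_le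
    have count0 := count_notMem_add_card (gap_notMem 0)
    have count := count_notMem_add_card (gap_notMem j)
    rw [Nat.count_nth_of_infinite hinf, ← hμ] at count0 count
    rw [columnGap]
    lia
  refine ⟨μ, Finset.ext fun y => not_iff_not.1 ?_⟩
  rw [notMem_firstColumnHooks_iff]
  simp only [columnGap_eq]
  exact Set.ext_iff.1 (Nat.range_nth_of_infinite hinf) y

end DiagramOfHooks

section Cores

variable {a b : ℕ} [NeZero a]

theorem twelve_mul_dispersion_firstGap_of_isCore {μ : YoungDiagram} (hμ : μ.IsCore a) :
    12 * dispersion (fun r : ZMod a => (firstGap (firstColumnHooks μ) r : ℤ)) =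
      a ^ 2 * (24 * μ.card + (a ^ 2 - 1)) := by
  rw [((isCore_iff_closedUnderSub (NeZero.pos a)).1 hμ).twelve_mul_dispersion_firstGap,
    ← two_mul_card_eq_sum_firstColumnHooks]
  ring

theorem card_le_of_isCore {μ : YoungDiagram} (hb : 0 < b) (hab : a.Coprime b) (hμa : μ.IsCore a)
    (hμb : μ.IsCore b) : 24 * (μ.card : ℤ) ≤ (a ^ 2 - 1) * (b ^ 2 - 1) := by
  have hclosed := (isCore_iff_closedUnderSub hb).1 hμb
  have bound := twelve_mul_dispersion_le (b := (b : ℤ))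
    (g := fun j : ZMod a => (firstGap (firstColumnHooks μ) (j * (b : ZMod a)) : ℤ)) fun j => by
      rw [add_one_mul]
      exact_mod_cast hclosed.firstGap_add_le (j * (b : ZMod a))
  rw [dispersion_comp_mul_natCast hab fun r => (firstGap (firstColumnHooks μ) r : ℤ),
    twelve_mul_dispersion_firstGap_of_isCore hμa, mul_assoc] at bound
  have ha_sq : (0 : ℤ) < a ^ 2 := by have := NeZero.pos a; positivity
  linarith [le_of_mul_le_mul_left bound ha_sq]

end Cores

section SemigroupGaps

variable {a b : ℕ}

lemma finite_compl_closure_pair (hab : a.Coprime b) :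
    {x | x ∉ AddSubmonoid.closure {a, b}}.Finite := by
  obtain ⟨n, hn⟩ := Nat.exists_mem_closure_of_ge {a, b}
  refine (Set.finite_lt_nat n).subset fun x hx => ?_
  by_contra hnx
  have hgcd : Nat.setGcd {a, b} ∣ 1 := hab ▸ Nat.dvd_gcd (Nat.setGcd_dvd_of_mem (by simp))
    (Nat.setGcd_dvd_of_mem (by simp))
  exact hx (hn x (not_lt.1 hnx) (hgcd.trans (one_dvd x)))

/-- The gaps of the numerical semigroup generated by `a` and `b`: the first-column hook lengths of
the largest `(a, b)`-core. -/
noncomputable def semigroupGaps (hab : a.Coprime b) : Finset ℕ :=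
  (finite_compl_closure_pair hab).toFinset

lemma mem_semigroupGaps (hab : a.Coprime b) {x : ℕ} :
    x ∈ semigroupGaps hab ↔ x ∉ AddSubmonoid.closure {a, b} :=
  Set.Finite.mem_toFinset _

lemma closedUnderSub_semigroupGaps (hab : a.Coprime b) {c : ℕ}
    (hc : c ∈ AddSubmonoid.closure {a, b}) : ClosedUnderSub (semigroupGaps hab) c := by
  intro x
  simp only [mem_semigroupGaps]
  exact mt fun hx => add_mem hx hc

lemma firstGap_semigroupGaps [NeZero a] (hab : a.Coprime b) (j : ZMod a) :
    firstGap (semigroupGaps hab) (j * (b : ZMod a)) = j.val * b := by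
  refine le_antisymm (firstGap_le (by simp) ?_) ?_
  · rw [mem_semigroupGaps, not_not, ← smul_eq_mul]
    exact nsmul_mem (AddSubmonoid.subset_closure (by simp)) _
  · have hmem := firstGap_notMem (semigroupGaps hab) (j * (b : ZMod a))
    rw [mem_semigroupGaps, not_not, AddSubmonoid.mem_closure_pair] at hmem
    obtain ⟨m, n, hmn⟩ := hmem
    simp only [smul_eq_mul] at hmn
    have hn : (n : ZMod a) = j := by
      have hcast := congrArg (Nat.cast : ℕ → ZMod a) hmn
      rw [cast_firstGap] at hcast
      have hb : IsUnit (b : ZMod a) := (ZMod.isUnit_iff_coprime b a).2 hab.symm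
      exact hb.mul_left_injective (by simpa using hcast)
    have hval : j.val ≤ n := by
      rw [← hn, ZMod.val_natCast]
      exact Nat.mod_le n a
    rw [← hmn]
    exact (Nat.mul_le_mul_right b hval).trans (Nat.le_add_left _ _)

theorem exists_isCore_card_eq [NeZero a] (hb : 0 < b) (hab : a.Coprime b) :
    ∃ μ : YoungDiagram, (μ.IsCore a ∧ μ.IsCore b) ∧
      24 * (μ.card : ℤ) = (a ^ 2 - 1) * (b ^ 2 - 1) := by
  have ha := NeZero.pos a
  obtain ⟨μ, hμ⟩ := exists_firstColumnHooks_eq (S := semigroupGaps hab)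
    (by simp [mem_semigroupGaps])
  have hcore {c : ℕ} (hc : 0 < c) (hmem : c ∈ ({a, b} : Set ℕ)) : μ.IsCore c :=
    (isCore_iff_closedUnderSub hc).2
      (hμ ▸ closedUnderSub_semigroupGaps hab (AddSubmonoid.subset_closure hmem))
  have hμa : μ.IsCore a := hcore ha (by simp)
  refine ⟨μ, ⟨hμa, hcore hb (by simp)⟩, ?_⟩
  have size := twelve_mul_dispersion_firstGap_of_isCore hμa
  rw [hμ, ← dispersion_comp_mul_natCast hab] at size
  simp only [firstGap_semigroupGaps, Nat.cast_mul] at size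
  rw [dispersion_mul_const, ← mul_assoc, twelve_mul_dispersion_val] at size
  have ha_sq : (a : ℤ) ^ 2 ≠ 0 := by positivity
  refine mul_left_cancel₀ ha_sq ?_
  linear_combination -size

end SemigroupGaps

end SimultaneousCores

/-- Olsson–Stanton: the maximum number of boxes of an `(a,b)`-core is
`(a^2-1)(b^2-1)/24`, which is a (nonnegative) integer. -/
theorem max_size_simultaneous_cores (a b : ℕ) (ha : 0 < a) (hb : 0 < b)
    (hab : Nat.Coprime a b) :
    IsGreatest (YoungDiagram.card '' {μ : YoungDiagram | μ.IsCore a ∧ μ.IsCore b})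
      ((a ^ 2 - 1) * (b ^ 2 - 1) / 24) ∧ 24 ∣ (a ^ 2 - 1) * (b ^ 2 - 1) := by
  have : NeZero a := ⟨ha.ne'⟩
  have hcast : (((a ^ 2 - 1) * (b ^ 2 - 1) : ℕ) : ℤ) = ((a : ℤ) ^ 2 - 1) * ((b : ℤ) ^ 2 - 1) := by
    rw [Nat.cast_mul, Nat.cast_pred (pow_pos ha 2), Nat.cast_pred (pow_pos hb 2)]
    push_cast
    rfl
  obtain ⟨μ, hμ, hcard⟩ := SimultaneousCores.exists_isCore_card_eq hb hab
  rw [← hcast] at hcard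
  refine ⟨⟨⟨μ, hμ, by lia⟩, ?_⟩, ⟨μ.card, by lia⟩⟩
  rintro _ ⟨ν, ⟨hνa, hνb⟩, rfl⟩
  have hle := SimultaneousCores.card_le_of_isCore hb hab hνa hνb
  rw [← hcast] at hle
  lia
end
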